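/- Kummer's first identity: for all a, c, w ∈ ℂ one has ₁𝐅₁(a; c; w) = e^w · ₁𝐅₁(c − a; c; −w). -/

import Mathlib

open Complex

/-- Olver-normalized confluent hypergeometric function
`₁𝐅₁(a; c; w) = ∑ (a)ₙ wⁿ/(n! Γ(c+n))`. -/
noncomputable def oneF1reg (a c w : ℂ) : ℂ :=
  ∑' n : ℕ, (ascPochhammer ℂ n).eval a * w ^ n / ((n.factorial : ℂ) * Complex.Gamma (c + n))

lemma inv_Gamma_step (s : ℂ) : (Gamma s)⁻¹ = s * (Gamma (s + 1))⁻¹ :=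
  by simpa using Complex.one_div_Gamma_eq_self_mul_one_div_Gamma_add_one s

lemma poch_left (n : ℕ) (x : ℂ) :
    (ascPochhammer ℂ (n + 1)).eval x = x * (ascPochhammer ℂ n).eval (x + 1) := by
  rw [ascPochhammer_succ_left]; simp

lemma vander (a : ℂ) (n : ℕ) : ∀ c : ℂ,
    ∑ p ∈ Finset.HasAntidiagonal.antidiagonal n, ((n.choose p.1 : ℕ) : ℂ) *
      ((-1) ^ p.1 * (ascPochhammer ℂ p.1).eval (c - a) * (Gamma (c + p.1))⁻¹)
      = (ascPochhammer ℂ n).eval a * (Gamma (c + n))⁻¹ := by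
  induction n with
  | zero => intro c; simp
  | succ n ih =>
    intro c
    rw [Finset.sum_antidiagonal_choose_succ_mul (fun i _ => (-1 : ℂ) ^ i *
      (ascPochhammer ℂ i).eval (c - a) * (Gamma (c + i))⁻¹) n]
    have h2 : ∑ p ∈ Finset.HasAntidiagonal.antidiagonal n, ((n.choose p.2 : ℕ) : ℂ) *
        ((-1 : ℂ) ^ (p.1 + 1) * (ascPochhammer ℂ (p.1 + 1)).eval (c - a) *
          (Gamma (c + (p.1 + 1 : ℕ)))⁻¹)
        = -(c - a) * ((ascPochhammer ℂ n).eval a * (Gamma (c + 1 + n))⁻¹) := by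
      rw [← ih (c + 1), Finset.mul_sum]
      refine Finset.sum_congr rfl fun p hp => ?_
      rw [Finset.HasAntidiagonal.mem_antidiagonal] at hp
      rw [poch_left, ← hp, Nat.choose_symm_add,
        show c + 1 - a = c - a + 1 by ring,
        show c + ((p.1 + 1 : ℕ) : ℂ) = c + 1 + p.1 by push_cast; ring]
      ring
    rw [h2, ih c, ascPochhammer_succ_eval, inv_Gamma_step (c + n),
      show c + ((n + 1 : ℕ) : ℂ) = c + n + 1 by push_cast; ring,
      show c + 1 + (n : ℂ) = c + n + 1 by ring]
    ring

lemma summ (a c w : ℂ) : Summable fun n : ℕ =>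
    ‖(ascPochhammer ℂ n).eval a * w ^ n / ((n.factorial : ℂ) * Gamma (c + n))‖ := by
  refine summable_of_ratio_norm_eventually_le (r := 1 / 2) (by norm_num) ?_
  obtain ⟨N, hN⟩ := exists_nat_ge (2 * ‖c‖ + 1 + ‖a‖ + 8 * ‖w‖)
  filter_upwards [Filter.eventually_ge_atTop N] with n hn
  have hn' : (N : ℝ) ≤ n := by exact_mod_cast hn
  have ha := norm_nonneg a
  have hc := norm_nonneg c
  have hw := norm_nonneg w
  have h1 : ‖a + n‖ ≤ 2 * n := by
    have := norm_add_le a (n : ℂ)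
    rw [Complex.norm_natCast] at this
    linarith
  have h2 : (n : ℝ) / 2 ≤ ‖c + n‖ := by
    have := norm_sub_le (c + n) c
    rw [add_sub_cancel_left, Complex.norm_natCast] at this
    linarith
  have hn0 : (0 : ℝ) < n := by linarith
  have hcn : 0 < ‖c + n‖ := by linarith
  have hcn' : c + n ≠ 0 := norm_pos_iff.1 hcn
  have e : (ascPochhammer ℂ (n + 1)).eval a * w ^ (n + 1) /
      (((n + 1).factorial : ℂ) * Gamma (c + (n + 1 : ℕ)))
      = ((a + n) * w / ((n + 1 : ℕ) * (c + n))) *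
      ((ascPochhammer ℂ n).eval a * w ^ n / ((n.factorial : ℂ) * Gamma (c + n))) := by
    rw [ascPochhammer_succ_eval, Nat.factorial_succ,
      show c + ((n + 1 : ℕ) : ℂ) = c + n + 1 by push_cast; ring, Complex.Gamma_add_one _ hcn']
    simp only [div_eq_mul_inv, mul_inv, Nat.cast_mul]
    ring
  rw [norm_norm, norm_norm, e, norm_mul]
  refine mul_le_mul_of_nonneg_right ?_ (norm_nonneg _)
  rw [norm_div, norm_mul, norm_mul, Complex.norm_natCast, div_le_iff₀ (by positivity)]
  push_cast
  have k1 : ‖a + n‖ * ‖w‖ ≤ 2 * n * (n / 8) :=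
    mul_le_mul h1 (by linarith) hw (by linarith)
  have k2 : ((n : ℝ) + 1) * (n / 2) ≤ (n + 1) * ‖c + n‖ :=
    mul_le_mul_of_nonneg_left h2 (by linarith)
  nlinarith

/-- Kummer's first identity `₁𝐅₁(a; c; w) = e^w ₁𝐅₁(c-a; c; -w)`. -/
theorem kummer_first_identity (a c w : ℂ) :
    oneF1reg a c w = Complex.exp w * oneF1reg (c - a) c (-w) := by
  have he : Complex.exp w = ∑' n : ℕ, w ^ n / (n.factorial : ℂ) := by
    rw [Complex.exp_eq_exp_ℂ, NormedSpace.exp_eq_tsum_div]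
  have hs : Summable fun n : ℕ => ‖w ^ n / (n.factorial : ℂ)‖ :=
    NormedSpace.norm_expSeries_div_summable w
  rw [mul_comm, he]
  unfold oneF1reg
  rw [tsum_mul_tsum_eq_tsum_sum_antidiagonal_of_summable_norm (summ (c - a) c (-w)) hs]
  refine tsum_congr fun n => ?_
  have hv := vander a n c
  have : (ascPochhammer ℂ n).eval a * w ^ n / ((n.factorial : ℂ) * Gamma (c + n))
      = w ^ n / n.factorial * ((ascPochhammer ℂ n).eval a * (Gamma (c + n))⁻¹) := by
    simp only [div_eq_mul_inv, mul_inv]; ring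
  rw [this, ← hv, Finset.mul_sum]
  refine Finset.sum_congr rfl fun p hp => ?_
  rw [Finset.HasAntidiagonal.mem_antidiagonal] at hp
  have hf : ((n.choose p.1 : ℕ) : ℂ) = n.factorial / (p.1.factorial * p.2.factorial) := by
    rw [← hp, Nat.cast_add_choose]
  have hnf : (n.factorial : ℂ) ≠ 0 := by exact_mod_cast n.factorial_ne_zero
  have hw : w ^ n = w ^ p.1 * w ^ p.2 := by rw [← hp, pow_add]
  rw [hf, hw, neg_pow w]
  simp only [div_eq_mul_inv, mul_inv]
  field_simp
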